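/- Let 0<α<1, β > 0, and λ > 0. Then for every t > 0, ∫₀ᵗ τ^{α−1} E_{α,α}(−λ τ^α) (t−τ)^{β−1} E_{α,β}(−λ (t−τ)^α) dτ = (1/α)(E_{α,α+β−1}(−λ t^α) + (1−β) E_{α,α+β}(−λ t^α)) · t^{α+β−1}. -/

import Mathlib

open MeasureTheory Set Filter

/-- The two-parameter Mittag-Leffler function `E_{α,β}(z) = ∑_{k≥0} z^k/Γ(αk+β)`. -/
noncomputable def ml (α β z : ℝ) : ℝ := ∑' k : ℕ, z ^ k / Real.Gamma (α * k + β)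

/-!
With `g_u(τ) = τ^{u-1}/Γ(u)`, the function `τ^{β-1} E_{α,β}(cτ^α)` is the series
`∑_k c^k g_{αk+β}(τ)`. Euler's Beta integral says `g_u * g_v = g_{u+v}`, so the terms of the
convolution of two such series depend only on `n = j + k`, and collecting the `n + 1` equal ones
gives `∑_n (n + 1) c^n g_{αn+γ+β}(t)`. The factor `n + 1` is absorbed by `1/Γ(s-1) = (s-1)/Γ(s)`:
with `s = αn + γ + β` one has `α(n + 1) = (s - 1) + (α + 1 - γ - β)`.
-/

lemma integral_rpow_mul_sub_rpow {u v t : ℝ} (hu : 0 < u) (hv : 0 < v) (ht : 0 < t) :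
    ∫ τ in (0 : ℝ)..t, τ ^ (u - 1) * (t - τ) ^ (v - 1)
      = t ^ (u + v - 1) * (Real.Gamma u * Real.Gamma v / Real.Gamma (u + v)) := by
  have hcomplex := Complex.betaIntegral_scaled u v ht
  rw [Complex.betaIntegral_eq_Gamma_mul_div _ _ (by simpa) (by simpa)] at hcomplex
  apply Complex.ofReal_injective
  rw [← intervalIntegral.integral_ofReal]
  push_cast [← Complex.Gamma_ofReal, Complex.ofReal_cpow ht.le]
  rw [← hcomplex]
  refine intervalIntegral.integral_congr fun τ hτ ↦ ?_
  rw [uIcc_of_le ht.le] at hτ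
  push_cast [Complex.ofReal_cpow hτ.1, Complex.ofReal_cpow (sub_nonneg.2 hτ.2)]
  rfl

lemma inv_Gamma_eq_mul_inv_Gamma_add_one (s : ℝ) :
    (Real.Gamma s)⁻¹ = s * (Real.Gamma (s + 1))⁻¹ := by
  rcases eq_or_ne s 0 with rfl | hs
  · simp [Real.Gamma_zero]
  · rw [Real.Gamma_add_one hs, mul_inv, mul_inv_cancel_left₀ hs]

lemma rpow_mul_exp_neg_le_Gamma {R s : ℝ} (hR : 0 ≤ R) (hs : 1 ≤ s) :
    R ^ (s - 1) * Real.exp (-R) ≤ Real.Gamma s := by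
  have hconv := Real.GammaIntegral_convergent (zero_lt_one.trans_le hs)
  calc R ^ (s - 1) * Real.exp (-R)
      = ∫ x in Ioi R, Real.exp (-x) * R ^ (s - 1) := by
        rw [integral_mul_const, integral_exp_neg_Ioi, mul_comm]
    _ ≤ ∫ x in Ioi R, Real.exp (-x) * x ^ (s - 1) := by
        refine setIntegral_mono_on ((integrableOn_exp_neg_Ioi R).mul_const _)
          (hconv.mono_set (Ioi_subset_Ioi hR)) measurableSet_Ioi fun x (hx : R < x) ↦ ?_
        gcongr
    _ ≤ ∫ x in Ioi 0, Real.exp (-x) * x ^ (s - 1) := by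
        refine setIntegral_mono_set hconv ?_ (Ioi_subset_Ioi hR).eventuallyLE
        filter_upwards [ae_restrict_mem measurableSet_Ioi] with x (hx : 0 < x)
        exact mul_nonneg (Real.exp_pos _).le (Real.rpow_nonneg hx.le _)
    _ = Real.Gamma s := (Real.Gamma_eq_integral (zero_lt_one.trans_le hs)).symm

lemma isBigO_rpow_Gamma {R : ℝ} (hR : 0 < R) :
    (fun s ↦ R ^ s) =O[atTop] Real.Gamma := by
  refine Asymptotics.IsBigO.of_bound (R * Real.exp R) ?_
  filter_upwards [eventually_ge_atTop 1] with s hs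
  rw [Real.norm_of_nonneg (Real.rpow_nonneg hR.le s),
    Real.norm_of_nonneg (Real.Gamma_pos_of_pos (zero_lt_one.trans_le hs)).le]
  calc R ^ s = R * Real.exp R * (R ^ (s - 1) * Real.exp (-R)) := by
        rw [Real.rpow_sub_one hR.ne', Real.exp_neg]
        field_simp
    _ ≤ R * Real.exp R * Real.Gamma s := by
        gcongr
        exact rpow_mul_exp_neg_le_Gamma hR.le hs

lemma summable_pow_div_Gamma {α : ℝ} (hα : 0 < α) (b z : ℝ) :
    Summable fun k : ℕ ↦ z ^ k / Real.Gamma (α * k + b) := by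
  set q : ℝ := |z| + 1
  have hq : 0 < q := by positivity
  set R : ℝ := q ^ α⁻¹
  have hR : 0 < R := Real.rpow_pos_of_pos hq _
  have hRpow (k : ℕ) : R ^ (α * k + b) = R ^ b * q ^ k := by
    rw [Real.rpow_add hR, Real.rpow_mul hR.le, Real.rpow_inv_rpow hq.le hα.ne', Real.rpow_natCast,
      mul_comm]
  have htop : Tendsto (fun k : ℕ ↦ α * k + b) atTop atTop :=
    tendsto_atTop_add_const_right _ _ (tendsto_natCast_atTop_atTop.const_mul_atTop hα)
  have hratio : ‖z / q‖ < 1 := by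
    rw [norm_div, Real.norm_of_nonneg hq.le, div_lt_one hq]
    exact lt_add_one |z|
  have hinv : (fun k : ℕ ↦ (Real.Gamma (α * k + b))⁻¹) =O[atTop] fun k : ℕ ↦ (R ^ b * q ^ k)⁻¹ := by
    refine Asymptotics.IsBigO.inv_rev ?_ ?_
    · simpa only [Function.comp_def, hRpow] using (isBigO_rpow_Gamma hR).comp_tendsto htop
    · exact .of_forall fun k h ↦ absurd h (by positivity)
  refine summable_of_isBigO_nat
    ((summable_geometric_of_norm_lt_one hratio).mul_left (R ^ b)⁻¹) ?_
  refine ((Asymptotics.isBigO_refl (fun k : ℕ ↦ z ^ k) atTop).mul hinv).congr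
    (fun k ↦ (div_eq_mul_inv _ _).symm) fun k ↦ ?_
  rw [div_pow, mul_inv]
  ring

lemma hasSum_succ_mul_pow_div_Gamma {α : ℝ} (hα : 0 < α) (b z : ℝ) :
    HasSum (fun n : ℕ ↦ (n + 1 : ℝ) * (z ^ n / Real.Gamma (α * n + b)))
      (1 / α * (ml α (b - 1) z + (α + 1 - b) * ml α b z)) := by
  have hsum := ((summable_pow_div_Gamma hα (b - 1) z).hasSum.add
    ((summable_pow_div_Gamma hα b z).hasSum.mul_left (α + 1 - b))).mul_left (1 / α)
  refine hsum.congr_fun fun n ↦ ?_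
  have hrec := inv_Gamma_eq_mul_inv_Gamma_add_one (α * n + (b - 1))
  rw [show α * (n : ℝ) + (b - 1) + 1 = α * n + b by ring] at hrec
  rw [div_eq_mul_inv _ (Real.Gamma (α * n + (b - 1))), hrec]
  field_simp
  ring

section Antidiagonal

open Finset

lemma tsum_antidiagonal_comp_add {E : Type*} [AddCommMonoid E] [TopologicalSpace E]
    (g : ℕ → E) (n : ℕ) :
    ∑' p : HasAntidiagonal.antidiagonal n, g (p.1.1 + p.1.2) = (n + 1) • g n := by
  have hconst (p : HasAntidiagonal.antidiagonal n) : g (p.1.1 + p.1.2) = g n := by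
    rw [HasAntidiagonal.mem_antidiagonal.1 p.2]
  simp only [hconst, tsum_fintype, sum_const, card_univ, Fintype.card_coe, Nat.card_antidiagonal]

variable {E : Type*} [NormedAddCommGroup E] [CompleteSpace E] {g : ℕ → E}

lemma summable_comp_fst_add_snd (hg : Summable fun n ↦ (n + 1) • ‖g n‖) :
    Summable fun p : ℕ × ℕ ↦ g (p.1 + p.2) := by
  refine .of_norm (HasAntidiagonal.sigmaAntidiagonalEquivProd.summable_iff.1 ?_)
  refine (summable_sigma_of_nonneg fun _ ↦ norm_nonneg _).2
    ⟨fun _ ↦ (hasSum_fintype _).summable, ?_⟩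
  exact hg.congr fun n ↦ (tsum_antidiagonal_comp_add (‖g ·‖) n).symm

lemma tsum_comp_fst_add_snd (hg : Summable fun n ↦ (n + 1) • ‖g n‖) :
    ∑' p : ℕ × ℕ, g (p.1 + p.2) = ∑' n, (n + 1) • g n := by
  have hsigma :=
    HasAntidiagonal.sigmaAntidiagonalEquivProd.summable_iff.2 (summable_comp_fst_add_snd hg)
  calc ∑' p : ℕ × ℕ, g (p.1 + p.2)
      = ∑' (n) (p : HasAntidiagonal.antidiagonal n), g (p.1.1 + p.1.2) :=
        (HasAntidiagonal.sigmaAntidiagonalEquivProd.tsum_eq _).symm.trans hsigma.tsum_sigma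
    _ = ∑' n, (n + 1) • g n := tsum_congr (tsum_antidiagonal_comp_add g)

end Antidiagonal

lemma integral_tsum_mul_of_nonneg {ι Ω : Type*} [Countable ι] [MeasurableSpace Ω] {μ : Measure Ω}
    {a : ι → ℝ} {ψ : ι → Ω → ℝ} (hint : ∀ i, Integrable (ψ i) μ) (hnonneg : ∀ i, 0 ≤ᵐ[μ] ψ i)
    (hsum : Summable fun i ↦ a i * ∫ x, ψ i x ∂μ) :
    ∫ x, ∑' i, a i * ψ i x ∂μ = ∑' i, a i * ∫ x, ψ i x ∂μ := by
  have hnorm (i : ι) : ∫ x, ‖a i * ψ i x‖ ∂μ = ‖a i * ∫ x, ψ i x ∂μ‖ := by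
    rw [norm_mul, Real.norm_of_nonneg (integral_nonneg_of_ae (hnonneg i)), ← integral_const_mul]
    refine integral_congr_ae ?_
    filter_upwards [hnonneg i] with x hx
    rw [norm_mul, Real.norm_of_nonneg hx]
  rw [← integral_tsum_of_summable_integral_norm (fun i ↦ (hint i).const_mul (a i))
    (by simpa only [hnorm] using hsum.norm)]
  simp only [integral_const_mul]

/-- The Riemann–Liouville kernel `g_u(τ) = τ^{u-1}/Γ(u)` of fractional integration of order `u`,
meaningful for `τ > 0`: the formula is not cut off to zero for negative `τ`. -/
noncomputable def riemannLiouvilleKernel (u τ : ℝ) : ℝ := τ ^ (u - 1) / Real.Gamma u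

namespace riemannLiouvilleKernel

lemma nonneg {u τ : ℝ} (hu : 0 < u) (hτ : 0 ≤ τ) : 0 ≤ riemannLiouvilleKernel u τ :=
  div_nonneg (Real.rpow_nonneg hτ _) (Real.Gamma_pos_of_pos hu).le

lemma pos {u τ : ℝ} (hu : 0 < u) (hτ : 0 < τ) : 0 < riemannLiouvilleKernel u τ :=
  div_pos (Real.rpow_pos_of_pos hτ _) (Real.Gamma_pos_of_pos hu)

lemma integral_mul {u v t : ℝ} (hu : 0 < u) (hv : 0 < v) (ht : 0 < t) :
    ∫ τ in (0 : ℝ)..t, riemannLiouvilleKernel u τ * riemannLiouvilleKernel v (t - τ)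
      = riemannLiouvilleKernel (u + v) t := by
  have hΓu := (Real.Gamma_pos_of_pos hu).ne'
  have hΓv := (Real.Gamma_pos_of_pos hv).ne'
  simp only [riemannLiouvilleKernel, div_mul_div_comm, intervalIntegral.integral_div,
    integral_rpow_mul_sub_rpow hu hv ht]
  field_simp

lemma intervalIntegrable_mul {u v t : ℝ} (hu : 0 < u) (hv : 0 < v) (ht : 0 < t) :
    IntervalIntegrable
      (fun τ ↦ riemannLiouvilleKernel u τ * riemannLiouvilleKernel v (t - τ)) volume 0 t := by
  apply intervalIntegral.intervalIntegrable_of_integral_ne_zero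
  rw [integral_mul hu hv ht]
  exact (pos (add_pos hu hv) ht).ne'

lemma pow_mul_eq {t : ℝ} (ht : 0 < t) (α b c : ℝ) (k : ℕ) :
    c ^ k * riemannLiouvilleKernel (α * k + b) t
      = t ^ (b - 1) * ((c * t ^ α) ^ k / Real.Gamma (α * k + b)) := by
  rw [riemannLiouvilleKernel, add_sub_assoc, Real.rpow_add ht, Real.rpow_mul ht.le,
    Real.rpow_natCast, mul_pow]
  ring

lemma tsum_pow_mul {t : ℝ} (ht : 0 < t) (α b c : ℝ) :
    ∑' k : ℕ, c ^ k * riemannLiouvilleKernel (α * k + b) t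
      = t ^ (b - 1) * ml α b (c * t ^ α) := by
  simp only [pow_mul_eq ht, tsum_mul_left, ml]

lemma summable_pow_mul {α t : ℝ} (hα : 0 < α) (ht : 0 < t) (b c : ℝ) :
    Summable fun k : ℕ ↦ c ^ k * riemannLiouvilleKernel (α * k + b) t := by
  simpa only [pow_mul_eq ht] using (summable_pow_div_Gamma hα b (c * t ^ α)).mul_left _

lemma hasSum_succ_mul_pow_mul {α t : ℝ} (hα : 0 < α) (ht : 0 < t) (b c : ℝ) :
    HasSum (fun n : ℕ ↦ (n + 1) • (c ^ n * riemannLiouvilleKernel (α * n + b) t))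
      (1 / α * (ml α (b - 1) (c * t ^ α) + (α + 1 - b) * ml α b (c * t ^ α)) * t ^ (b - 1)) := by
  refine ((hasSum_succ_mul_pow_div_Gamma hα b (c * t ^ α)).mul_right (t ^ (b - 1))).congr_fun
    fun n ↦ ?_
  rw [pow_mul_eq ht, nsmul_eq_mul]
  push_cast
  ring

lemma ml_mul_ml_eq_tsum {α s t : ℝ} (hα : 0 < α) (hs : 0 < s) (ht : 0 < t) (b d c : ℝ) :
    s ^ (b - 1) * ml α b (c * s ^ α) * (t ^ (d - 1) * ml α d (c * t ^ α))
      = ∑' p : ℕ × ℕ, c ^ (p.1 + p.2) *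
        (riemannLiouvilleKernel (α * p.1 + b) s * riemannLiouvilleKernel (α * p.2 + d) t) := by
  rw [← tsum_pow_mul hs, ← tsum_pow_mul ht, tsum_mul_tsum_of_summable_norm
    (summable_pow_mul hα hs b c).norm (summable_pow_mul hα ht d c).norm]
  simp only [pow_add, mul_mul_mul_comm]

lemma integral_ml_mul_ml_eq_tsum {α b d t : ℝ} (hα : 0 < α) (hb : 0 < b) (hd : 0 < d)
    (ht : 0 < t) (c : ℝ) :
    ∫ τ in (0 : ℝ)..t, τ ^ (b - 1) * ml α b (c * τ ^ α) *
        ((t - τ) ^ (d - 1) * ml α d (c * (t - τ) ^ α))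
      = ∑' n : ℕ, (n + 1) • (c ^ n * riemannLiouvilleKernel (α * n + (b + d)) t) := by
  let g (n : ℕ) : ℝ := c ^ n * riemannLiouvilleKernel (α * n + (b + d)) t
  have hg : Summable fun n ↦ (n + 1) • ‖g n‖ := by
    simpa only [g, nsmul_eq_mul, norm_mul, RCLike.norm_natCast]
      using (hasSum_succ_mul_pow_mul hα ht (b + d) c).summable.norm
  let ψ (p : ℕ × ℕ) (τ : ℝ) : ℝ :=
    riemannLiouvilleKernel (α * p.1 + b) τ * riemannLiouvilleKernel (α * p.2 + d) (t - τ)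
  have hbk (k : ℕ) : 0 < α * k + b := by positivity
  have hdk (k : ℕ) : 0 < α * k + d := by positivity
  have hψ (p : ℕ × ℕ) : c ^ (p.1 + p.2) * ∫ τ in Ioc 0 t, ψ p τ = g (p.1 + p.2) := by
    rw [← intervalIntegral.integral_of_le ht.le, integral_mul (hbk _) (hdk _) ht]
    simp only [g]
    push_cast
    congr 2
    ring
  calc _ = ∫ τ in (0 : ℝ)..t, ∑' p : ℕ × ℕ, c ^ (p.1 + p.2) * ψ p τ :=
        intervalIntegral.integral_congr_Ioo_of_le ht.le fun τ hτ ↦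
          ml_mul_ml_eq_tsum hα hτ.1 (sub_pos.2 hτ.2) b d c
    _ = ∑' p : ℕ × ℕ, c ^ (p.1 + p.2) * ∫ τ in Ioc 0 t, ψ p τ := by
        rw [intervalIntegral.integral_of_le ht.le]
        refine integral_tsum_mul_of_nonneg (fun p ↦ ?_) (fun p ↦ ?_) ?_
        · exact (intervalIntegrable_iff_integrableOn_Ioc_of_le ht.le).1
            (intervalIntegrable_mul (hbk _) (hdk _) ht)
        · filter_upwards [ae_restrict_mem measurableSet_Ioc] with τ hτ
          exact mul_nonneg (nonneg (hbk _) hτ.1.le) (nonneg (hdk _) (sub_nonneg.2 hτ.2))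
        · simpa only [hψ] using summable_comp_fst_add_snd hg
    _ = ∑' n, (n + 1) • g n := by simp only [hψ, tsum_comp_fst_add_snd hg]

end riemannLiouvilleKernel

theorem mittagLeffler_convolution_eq_general {α β γ t : ℝ} (hα : 0 < α) (hβ : 0 < β) (hγ : 0 < γ)
    (ht : 0 < t) (c : ℝ) :
    ∫ τ in (0 : ℝ)..t, τ ^ (γ - 1) * ml α γ (c * τ ^ α) *
        ((t - τ) ^ (β - 1) * ml α β (c * (t - τ) ^ α))
      = 1 / α * (ml α (γ + β - 1) (c * t ^ α)
          + (α + 1 - (γ + β)) * ml α (γ + β) (c * t ^ α)) * t ^ (γ + β - 1) := by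
  rw [riemannLiouvilleKernel.integral_ml_mul_ml_eq_tsum hα hγ hβ ht c]
  exact (riemannLiouvilleKernel.hasSum_succ_mul_pow_mul hα ht (γ + β) c).tsum_eq

/-- for `0<α<1`, `β>0`, `λ>0` and `t > 0`,
`∫₀ᵗ τ^{α−1} E_{α,α}(−λτ^α) (t−τ)^{β−1} E_{α,β}(−λ(t−τ)^α) dτ
  = (1/α)(E_{α,α+β−1}(−λt^α) + (1−β) E_{α,α+β}(−λt^α)) t^{α+β−1}`. -/
theorem mittagLeffler_convolution_eq (α β lam : ℝ)
    (hα : 0 < α) (hα1 : α < 1) (hβ : 0 < β) (hlam : 0 < lam) :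
    ∀ t : ℝ, 0 < t →
      (∫ τ in (0:ℝ)..t, τ ^ (α - 1) * ml α α (-lam * τ ^ α) *
          ((t - τ) ^ (β - 1) * ml α β (-lam * (t - τ) ^ α)))
        = (1 / α) * (ml α (α + β - 1) (-lam * t ^ α)
            + (1 - β) * ml α (α + β) (-lam * t ^ α)) * t ^ (α + β - 1) := by
  intro t ht
  rw [mittagLeffler_convolution_eq_general hα hβ hα ht, add_sub_add_left_eq_sub]
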